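/- Let 0 ≤ q ≤ 1, η > 0, θ ≥ 0, τ ≥ 0 and fix s > 0 and x ∈ ℝ. Then for every k ≥ 1, Σ_{j=0}^{k} [k choose j]_q q^{(k−j)(k−j−1)/2} p_{k−j}(x;s) = Π_{j=0}^{k−1} A_j(x,s)/a_j. -/

import Mathlib

/-- `[n]_q = 1 + q + ⋯ + q^{n-1}`. -/
noncomputable def qnum (q : ℝ) (n : ℕ) : ℝ := ∑ i ∈ Finset.range n, q ^ i

/-- `[n]_q! = [1]_q [2]_q ⋯ [n]_q`. -/
noncomputable def qfact (q : ℝ) (n : ℕ) : ℝ := ∏ i ∈ Finset.range n, qnum q (i + 1)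

/-- q-binomial coefficient `[n choose k]_q`, with the convention that it is `0` for `k > n`. -/
noncomputable def qbinom (q : ℝ) (n k : ℕ) : ℝ :=
  if k ≤ n then qfact q n / (qfact q (n - k) * qfact q k) else 0

/-- `a_n = η⁻¹ + θ[n]_q + [n]_q² ητ`. -/
noncomputable def aCoef (η θ τ q : ℝ) (n : ℕ) : ℝ :=
  η⁻¹ + θ * qnum q n + (qnum q n) ^ 2 * η * τ

/-- `b_n(t) = (tη + θ + ([n]_q + [n-1]_q)ητ)[n]_q`. -/
noncomputable def bCoef (η θ τ q t : ℝ) (n : ℕ) : ℝ :=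
  (t * η + θ + (qnum q n + qnum q (n - 1)) * η * τ) * qnum q n

/-- `c_n(t) = η(t + τ[n-1]_q)[n]_q`. -/
noncomputable def cCoef (η τ q t : ℝ) (n : ℕ) : ℝ :=
  η * (t + τ * qnum q (n - 1)) * qnum q n

/-- `A_n(x,s) = a_n + q^n x - sη q^n [n]_q`. -/
noncomputable def ACoef (η θ τ q x s : ℝ) (n : ℕ) : ℝ :=
  aCoef η θ τ q n + q ^ n * x - s * η * q ^ n * qnum q n

/-- `x_k(s) = ((sη q^k - θ)[k]_q - η⁻¹ - ητ[k]_q²)/q^k`, the zero of `x ↦ A_k(x,s)`. -/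
noncomputable def xPt (η θ τ q s : ℝ) (k : ℕ) : ℝ :=
  ((s * η * q ^ k - θ) * qnum q k - η⁻¹ - η * τ * (qnum q k) ^ 2) / q ^ k

/-!
Let `E` be the shift of sequences. The left-hand side is the value at `0` of
`∏_{i<k} (1 + q^i E)` applied to `p`, so the sum `S k` of `p` satisfies
`S (k + 1) = S k + q^k * S' k`, where `S' k` is the same sum for the shifted sequence. Hence it
suffices that `a_k * S' k = (x - s * η * [k]) * S k`. The weights `w m` of these sums satisfy
`[m+1] * w (m+1) = ([k] - [m]) * w m`, so terms of the form
`w m * (([k] - [m]) * g (m+1) - [m] * g m)` telescope to zero; the recurrence puts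
`a_k * p (m+1) - (x - s * η * [k]) * p m` in this form.
-/

section QBinomial

variable {q : ℝ}

lemma qnum_zero (q : ℝ) : qnum q 0 = 0 :=
  Finset.sum_range_zero _

lemma qnum_add (q : ℝ) (m n : ℕ) : qnum q (m + n) = qnum q m + q ^ m * qnum q n := by
  simp only [qnum, Finset.sum_range_add, Finset.mul_sum, pow_add]

lemma qnum_nonneg (hq : 0 ≤ q) (n : ℕ) : 0 ≤ qnum q n :=
  Finset.sum_nonneg fun _ _ => pow_nonneg hq _

lemma qnum_succ_ne_zero (hq : q ≠ -1) (n : ℕ) : qnum q (n + 1) ≠ 0 :=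
  geom_sum_ne_zero hq n.succ_ne_zero

lemma qfact_zero (q : ℝ) : qfact q 0 = 1 :=
  Finset.prod_range_zero _

lemma qfact_succ (q : ℝ) (n : ℕ) : qfact q (n + 1) = qfact q n * qnum q (n + 1) :=
  Finset.prod_range_succ _ n

lemma qfact_ne_zero (hq : q ≠ -1) (n : ℕ) : qfact q n ≠ 0 :=
  Finset.prod_ne_zero_iff.mpr fun _ _ => qnum_succ_ne_zero hq _

lemma qbinom_eq_zero_of_lt (q : ℝ) {n k : ℕ} (h : n < k) : qbinom q n k = 0 :=
  if_neg h.not_ge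

lemma qbinom_add_left (q : ℝ) (k d : ℕ) :
    qbinom q (k + d) k = qfact q (k + d) / (qfact q d * qfact q k) := by
  simp only [qbinom, Nat.le_add_right, if_true, Nat.add_sub_cancel_left]

lemma qbinom_symm (q : ℝ) {n k : ℕ} (h : k ≤ n) : qbinom q n (n - k) = qbinom q n k := by
  simp only [qbinom, h, Nat.sub_le, if_true, Nat.sub_sub_self, mul_comm]

lemma qbinom_zero_right (hq : q ≠ -1) (n : ℕ) : qbinom q n 0 = 1 := by
  simp only [qbinom, Nat.zero_le, if_true, Nat.sub_zero, qfact_zero, mul_one,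
    div_self (qfact_ne_zero hq n)]

lemma qnum_mul_qbinom_succ_right (hq : q ≠ -1) (n k : ℕ) :
    qnum q (k + 1) * qbinom q n (k + 1) = qnum q (n - k) * qbinom q n k := by
  rcases le_or_gt n k with hnk | hkn
  · rw [qbinom_eq_zero_of_lt q (Nat.lt_succ_of_le hnk), Nat.sub_eq_zero_of_le hnk, qnum_zero,
      mul_zero, zero_mul]
  · obtain ⟨d, rfl⟩ := Nat.exists_eq_add_of_le (Nat.succ_le_of_lt hkn)
    have hsub : k + 1 + d - k = d + 1 := by omega
    have hbinom := qbinom_add_left q k (d + 1)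
    rw [← add_assoc, add_right_comm] at hbinom
    rw [hsub, qbinom_add_left, hbinom, qfact_succ q k, qfact_succ q d]
    field_simp [qnum_succ_ne_zero hq k, qnum_succ_ne_zero hq d]

lemma qnum_mul_qbinom_succ_succ (hq : q ≠ -1) (n k : ℕ) :
    qnum q (k + 1) * qbinom q (n + 1) (k + 1) = qnum q (n + 1) * qbinom q n k := by
  rcases lt_or_ge n k with hnk | hkn
  · rw [qbinom_eq_zero_of_lt q hnk, qbinom_eq_zero_of_lt q (Nat.succ_lt_succ hnk), mul_zero,
      mul_zero]
  · obtain ⟨d, rfl⟩ := Nat.exists_eq_add_of_le hkn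
    rw [add_right_comm, qbinom_add_left, qbinom_add_left, add_right_comm, qfact_succ q k,
      qfact_succ q (k + d)]
    field_simp [qnum_succ_ne_zero hq k]

lemma qbinom_succ_succ (hq : q ≠ -1) (n k : ℕ) :
    qbinom q (n + 1) (k + 1) = qbinom q n (k + 1) + q ^ (n - k) * qbinom q n k := by
  rcases lt_or_ge n k with hnk | hkn
  · simp only [qbinom_eq_zero_of_lt q hnk, qbinom_eq_zero_of_lt q (Nat.succ_lt_succ hnk),
      qbinom_eq_zero_of_lt q (Nat.lt_succ_of_lt hnk), mul_zero, add_zero]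
  · have hsplit : qnum q (n + 1) = qnum q (n - k) + q ^ (n - k) * qnum q (k + 1) := by
      rw [← qnum_add, ← add_assoc, Nat.sub_add_cancel hkn]
    apply mul_left_cancel₀ (qnum_succ_ne_zero hq k)
    linear_combination qnum_mul_qbinom_succ_succ hq n k - qnum_mul_qbinom_succ_right hq n k
      + qbinom q n k * hsplit

end QBinomial

section QWeight

variable {q : ℝ}

/-- The coefficient of `z ^ m` in `∏_{i<k} (1 + q^i z)`, in the closed form given by the
`q`-binomial theorem. -/
noncomputable def qWeight (q : ℝ) (k m : ℕ) : ℝ :=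
  qbinom q k m * q ^ m.choose 2

lemma qWeight_eq_zero_of_lt (q : ℝ) {k m : ℕ} (h : k < m) : qWeight q k m = 0 := by
  rw [qWeight, qbinom_eq_zero_of_lt q h, zero_mul]

lemma qWeight_zero_right (hq : q ≠ -1) (k : ℕ) : qWeight q k 0 = 1 := by
  rw [qWeight, qbinom_zero_right hq, Nat.choose_zero_succ, pow_zero, one_mul]

lemma qWeight_succ_right (q : ℝ) (k m : ℕ) :
    qWeight q k (m + 1) = qbinom q k (m + 1) * (q ^ m * q ^ m.choose 2) := by
  rw [qWeight, Nat.choose_succ_succ' m 1, Nat.choose_one_right, pow_add]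

lemma qnum_mul_qWeight_succ_right (hq : q ≠ -1) (k m : ℕ) :
    qnum q (m + 1) * qWeight q k (m + 1) = (qnum q k - qnum q m) * qWeight q k m := by
  rcases lt_or_ge k m with hkm | hmk
  · rw [qWeight_eq_zero_of_lt q hkm, qWeight_eq_zero_of_lt q (Nat.lt_succ_of_lt hkm), mul_zero,
      mul_zero]
  · have hsplit : qnum q k = qnum q m + q ^ m * qnum q (k - m) := by
      rw [← qnum_add, Nat.add_sub_cancel' hmk]
    rw [qWeight_succ_right, qWeight, hsplit]
    linear_combination q ^ m * q ^ m.choose 2 * qnum_mul_qbinom_succ_right hq k m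

lemma qWeight_succ_succ (hq : q ≠ -1) (k m : ℕ) :
    qWeight q (k + 1) (m + 1) = qWeight q k (m + 1) + q ^ k * qWeight q k m := by
  rcases lt_or_ge k m with hkm | hmk
  · simp only [qWeight_eq_zero_of_lt q hkm, qWeight_eq_zero_of_lt q (Nat.succ_lt_succ hkm),
      qWeight_eq_zero_of_lt q (Nat.lt_succ_of_lt hkm), mul_zero, add_zero]
  · rw [qWeight_succ_right, qWeight_succ_right, qWeight, qbinom_succ_succ hq,
      ← pow_sub_mul_pow q hmk]
    ring

/-- The value at `0` of `∏_{i<k} (1 + q^i E)` applied to the sequence `f`, where `E` is the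
shift. -/
noncomputable def qBinomialSum (q : ℝ) (k : ℕ) (f : ℕ → ℝ) : ℝ :=
  ∑ m ∈ Finset.range (k + 1), qWeight q k m * f m

lemma qBinomialSum_zero (hq : q ≠ -1) (f : ℕ → ℝ) : qBinomialSum q 0 f = f 0 := by
  rw [qBinomialSum, zero_add, Finset.sum_range_one, qWeight_zero_right hq, one_mul]

lemma qBinomialSum_succ (hq : q ≠ -1) (k : ℕ) (f : ℕ → ℝ) :
    qBinomialSum q (k + 1) f
      = qBinomialSum q k f + q ^ k * qBinomialSum q k (fun m => f (m + 1)) := by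
  have hextend : qBinomialSum q k f = ∑ m ∈ Finset.range (k + 2), qWeight q k m * f m := by
    rw [Finset.sum_range_succ, qWeight_eq_zero_of_lt q k.lt_succ_self, zero_mul, add_zero,
      qBinomialSum]
  rw [hextend]
  simp only [qBinomialSum, Finset.sum_range_succ' _ (k + 1), qWeight_zero_right hq,
    qWeight_succ_succ hq, add_mul, Finset.sum_add_distrib, mul_assoc, Finset.mul_sum]
  ring

lemma sum_qbinom_mul_eq_qBinomialSum (q : ℝ) (k : ℕ) (f : ℕ → ℝ) :
    ∑ j ∈ Finset.range (k + 1), qbinom q k j * q ^ ((k - j) * (k - j - 1) / 2) * f (k - j)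
      = qBinomialSum q k f := by
  rw [qBinomialSum, ← Finset.sum_range_reflect]
  refine Finset.sum_congr rfl fun j hj => ?_
  have hjk : j ≤ k := Finset.mem_range_succ_iff.mp hj
  rw [Nat.add_sub_cancel, qWeight, qbinom_symm q hjk, Nat.sub_sub_self hjk, Nat.choose_two_right]

lemma sum_qWeight_mul_sub_eq_zero (hq : q ≠ -1) (k : ℕ) (g : ℕ → ℝ) :
    ∑ m ∈ Finset.range (k + 1),
      qWeight q k m * ((qnum q k - qnum q m) * g (m + 1) - qnum q m * g m) = 0 := by
  let G : ℕ → ℝ := fun m => qnum q m * qWeight q k m * g m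
  calc ∑ m ∈ Finset.range (k + 1),
        qWeight q k m * ((qnum q k - qnum q m) * g (m + 1) - qnum q m * g m)
      = ∑ m ∈ Finset.range (k + 1), (G (m + 1) - G m) :=
        Finset.sum_congr rfl fun m _ => by
          simp only [G, qnum_mul_qWeight_succ_right hq]
          ring
    _ = G (k + 1) - G 0 := Finset.sum_range_sub G (k + 1)
    _ = 0 := by
        simp only [G, qWeight_eq_zero_of_lt q k.lt_succ_self, qnum_zero, mul_zero, zero_mul,
          sub_zero]

end QWeight

section Recurrence

variable {η θ τ q s x : ℝ}

lemma aCoef_pos (hη : 0 < η) (hθ : 0 ≤ θ) (hτ : 0 ≤ τ) (hq : 0 ≤ q) (n : ℕ) :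
    0 < aCoef η θ τ q n := by
  have := qnum_nonneg hq n
  unfold aCoef
  positivity

/-- The sequence `g` for which the recurrence of `p` takes the telescoping form
`a_k p_{m+1} - (x - sη[k]) p_m = ([k] - [m]) g_{m+1} - [m] g_m`. At `m = 0` the truncated `m - 1`
is harmless, since `g_0` is multiplied by `[0] = 0`. -/
noncomputable def recurrenceFlux (η θ τ q s : ℝ) (k : ℕ) (p : ℕ → ℝ) (m : ℕ) : ℝ :=
  (θ + η * τ * (qnum q k + qnum q (m - 1))) * p m + η * (s + τ * qnum q (m - 1)) * p (m - 1)

lemma aCoef_mul_sub_eq_recurrenceFlux {p : ℕ → ℝ} {m : ℕ}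
    (hp : x * p m = aCoef η θ τ q m * p (m + 1) + bCoef η θ τ q s m * p m
      + cCoef η τ q s m * p (m - 1)) (k : ℕ) :
    aCoef η θ τ q k * p (m + 1) - (x - s * η * qnum q k) * p m
      = (qnum q k - qnum q m) * recurrenceFlux η θ τ q s k p (m + 1)
        - qnum q m * recurrenceFlux η θ τ q s k p m := by
  simp only [recurrenceFlux, Nat.add_sub_cancel, aCoef, bCoef, cCoef] at hp ⊢
  linear_combination -hp

lemma aCoef_mul_qBinomialSum_shift (hq : q ≠ -1) {p : ℕ → ℝ}
    (hp : ∀ n, x * p n = aCoef η θ τ q n * p (n + 1) + bCoef η θ τ q s n * p n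
      + cCoef η τ q s n * p (n - 1)) (k : ℕ) :
    aCoef η θ τ q k * qBinomialSum q k (fun m => p (m + 1))
      = (x - s * η * qnum q k) * qBinomialSum q k p := by
  have htelescope := sum_qWeight_mul_sub_eq_zero hq k (recurrenceFlux η θ τ q s k p)
  simp only [← aCoef_mul_sub_eq_recurrenceFlux (hp _), mul_sub, Finset.sum_sub_distrib,
    mul_left_comm (qWeight q k _), ← Finset.mul_sum] at htelescope
  exact sub_eq_zero.mp htelescope

lemma aCoef_mul_qBinomialSum_succ (hq : q ≠ -1) {p : ℕ → ℝ}
    (hp : ∀ n, x * p n = aCoef η θ τ q n * p (n + 1) + bCoef η θ τ q s n * p n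
      + cCoef η τ q s n * p (n - 1)) (k : ℕ) :
    aCoef η θ τ q k * qBinomialSum q (k + 1) p = ACoef η θ τ q x s k * qBinomialSum q k p := by
  rw [qBinomialSum_succ hq, ACoef]
  linear_combination q ^ k * aCoef_mul_qBinomialSum_shift hq hp k

end Recurrence

theorem stmt1_general {η θ τ q s x : ℝ} (hq : q ≠ -1) (ha : ∀ n, aCoef η θ τ q n ≠ 0)
    {p : ℕ → ℝ} (hp0 : p 0 = 1)
    (hp : ∀ n, x * p n = aCoef η θ τ q n * p (n + 1) + bCoef η θ τ q s n * p n
      + cCoef η τ q s n * p (n - 1)) (k : ℕ) :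
    ∑ j ∈ Finset.range (k + 1), qbinom q k j * q ^ ((k - j) * (k - j - 1) / 2) * p (k - j)
      = ∏ j ∈ Finset.range k, ACoef η θ τ q x s j / aCoef η θ τ q j := by
  rw [sum_qbinom_mul_eq_qBinomialSum]
  induction k with
  | zero => rw [qBinomialSum_zero hq, hp0, Finset.prod_range_zero]
  | succ k ih =>
    rw [Finset.prod_range_succ, ← ih, mul_div_assoc', eq_div_iff (ha k)]
    linear_combination aCoef_mul_qBinomialSum_succ hq hp k

/-- for `0 ≤ q ≤ 1`, `η > 0`, `θ ≥ 0`, `τ ≥ 0`, `s > 0` and `x ∈ ℝ`, for every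
`k ≥ 1`, `∑_{j=0}^k [k choose j]_q q^{(k-j)(k-j-1)/2} p_{k-j}(x;s) = ∏_{j=0}^{k-1} A_j(x,s)/a_j`.
Here `p n y` denotes `p_n(y;s)`, given by its defining three-term recurrence (the `n = 0` case
of the recurrence is the correct one since `b_0 = c_0 = 0`). -/
theorem stmt1 (η θ τ q s x : ℝ)
    (hq0 : 0 ≤ q) (hq1 : q ≤ 1) (hη : 0 < η) (hθ : 0 ≤ θ) (hτ : 0 ≤ τ) (hs : 0 < s)
    (p : ℕ → ℝ → ℝ)
    (hp0 : ∀ y : ℝ, p 0 y = 1)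
    (hprec : ∀ (n : ℕ) (y : ℝ), y * p n y =
      aCoef η θ τ q n * p (n + 1) y + bCoef η θ τ q s n * p n y
        + cCoef η τ q s n * p (n - 1) y) :
    ∀ k : ℕ, 1 ≤ k →
      ∑ j ∈ Finset.range (k + 1),
          qbinom q k j * q ^ ((k - j) * (k - j - 1) / 2) * p (k - j) x
        = ∏ j ∈ Finset.range k, ACoef η θ τ q x s j / aCoef η θ τ q j :=
  fun k _ => stmt1_general (by linarith) (fun n => (aCoef_pos hη hθ hτ hq0 n).ne') (hp0 x)
    (fun n => hprec n x) k
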